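/- The second and fourth characteristic fields of the reduced two-phase thin-film system are genuinely nonlinear on 𝒰: for every U = (f, b, g, q) ∈ 𝒰 one has ∇λ₂(U)·r₂(U) = 3(fb − 3gq)/(4q) < 0 and ∇λ₄(U)·r₄(U) = 3g > 0, where λ₂(U) = 3fb/2, λ₄(U) = fb + 3gq/2, r₂(U) = ((fb−3gq)/(4qb), (fb−3gq)/(4qf), g/q, 1) and r₄(U) = (0, 0, g/q, 1); in particular both quantities are nonzero throughout 𝒰. -/

import Mathlib

/-!
Both speeds are built from products of two coordinates, and the derivative of `U i * U j` in the
direction `v` is `U i * v j + U j * v i`. Writing `κ = (fb - 3gq) / (4q)`, the first two components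
of `r₂` are `κ / b` and `κ / f`, so the derivative of `fb` along `r₂` is `2κ` and that of `λ₂` is
`3κ`. Similarly `r₄ = (0, 0, g / q, 1)`, so along `r₄` the derivative of `gq` is `2g` and that of
`fb` vanishes.
-/

theorem hasFDerivAt_apply_mul_apply {𝕜 ι : Type*} [NontriviallyNormedField 𝕜] [Finite ι]
    (i j : ι) (U : ι → 𝕜) :
    HasFDerivAt (fun V : ι → 𝕜 => V i * V j)
      (U i • ContinuousLinearMap.proj j + U j • ContinuousLinearMap.proj i :
        (ι → 𝕜) →L[𝕜] 𝕜) U := by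
  have := Fintype.ofFinite ι
  exact (hasFDerivAt_apply i U).mul (hasFDerivAt_apply j U)

/-- The second characteristic speed `λ₂ = 3fb/2`, in the coordinates `U = (f, b, g, q)`. -/
noncomputable def lambdaTwo (U : Fin 4 → ℝ) : ℝ := 3 * (U 0 * U 1) / 2

/-- The fourth characteristic speed `λ₄ = fb + 3gq/2`, in the coordinates `U = (f, b, g, q)`. -/
noncomputable def lambdaFour (U : Fin 4 → ℝ) : ℝ := U 0 * U 1 + 3 * (U 2 * U 3) / 2

/-- The second characteristic field `r₂`, normalized to have last component `1`. It is meaningful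
only where `f`, `b` and `q` are nonzero. -/
noncomputable def rTwo (U : Fin 4 → ℝ) : Fin 4 → ℝ :=
  ![(U 0 * U 1 - 3 * (U 2 * U 3)) / (4 * U 3 * U 1),
    (U 0 * U 1 - 3 * (U 2 * U 3)) / (4 * U 3 * U 0), U 2 / U 3, 1]

/-- The fourth characteristic field `r₄`, normalized to have last component `1`. It is meaningful
only where `q` is nonzero. -/
noncomputable def rFour (U : Fin 4 → ℝ) : Fin 4 → ℝ := ![0, 0, U 2 / U 3, 1]

section Derivatives

variable (U v : Fin 4 → ℝ)

theorem fderiv_lambdaTwo_apply :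
    fderiv ℝ lambdaTwo U v = 3 * (U 0 * v 1 + U 1 * v 0) / 2 := by
  have hasFDerivAt_lambdaTwo : HasFDerivAt lambdaTwo _ U :=
    ((hasFDerivAt_apply_mul_apply 0 1 U).const_mul 3).mul_const (2⁻¹ : ℝ)
  rw [hasFDerivAt_lambdaTwo.fderiv]
  simp [div_eq_inv_mul, mul_add]

theorem fderiv_lambdaFour_apply :
    fderiv ℝ lambdaFour U v =
      (U 0 * v 1 + U 1 * v 0) + 3 * (U 2 * v 3 + U 3 * v 2) / 2 := by
  have hasFDerivAt_lambdaFour : HasFDerivAt lambdaFour _ U :=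
    (hasFDerivAt_apply_mul_apply 0 1 U).add
      (((hasFDerivAt_apply_mul_apply 2 3 U).const_mul 3).mul_const (2⁻¹ : ℝ))
  rw [hasFDerivAt_lambdaFour.fderiv]
  simp [div_eq_inv_mul, mul_add]

end Derivatives

section GenuineNonlinearity

variable {U : Fin 4 → ℝ}

theorem fderiv_lambdaTwo_rTwo (hf : U 0 ≠ 0) (hb : U 1 ≠ 0) :
    fderiv ℝ lambdaTwo U (rTwo U) = 3 * (U 0 * U 1 - 3 * (U 2 * U 3)) / (4 * U 3) := by
  set κ := (U 0 * U 1 - 3 * (U 2 * U 3)) / (4 * U 3) with hκ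
  have rTwo_zero : rTwo U 0 = κ / U 1 := (div_div _ _ _).symm
  have rTwo_one : rTwo U 1 = κ / U 0 := (div_div _ _ _).symm
  calc fderiv ℝ lambdaTwo U (rTwo U)
      = 3 * (U 0 * (κ / U 0) + U 1 * (κ / U 1)) / 2 := by
        rw [fderiv_lambdaTwo_apply, rTwo_zero, rTwo_one]
    _ = 3 * κ := by rw [mul_div_cancel₀ _ hf, mul_div_cancel₀ _ hb]; ring
    _ = 3 * (U 0 * U 1 - 3 * (U 2 * U 3)) / (4 * U 3) := by rw [hκ, mul_div_assoc]

theorem fderiv_lambdaFour_rFour (hq : U 3 ≠ 0) :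
    fderiv ℝ lambdaFour U (rFour U) = 3 * U 2 :=
  calc fderiv ℝ lambdaFour U (rFour U)
      = (U 0 * 0 + U 1 * 0) + 3 * (U 2 * 1 + U 3 * (U 2 / U 3)) / 2 :=
        fderiv_lambdaFour_apply U (rFour U)
    _ = 3 * U 2 := by rw [mul_div_cancel₀ _ hq]; ring

theorem fields_two_four_genuinely_nonlinear_general (hf : U 0 ≠ 0) (hb : U 1 ≠ 0)
    (hg : 0 < U 2) (hq : 0 < U 3) (hU : U 0 * U 1 < 3 * (U 2 * U 3)) :
    (fderiv ℝ lambdaTwo U (rTwo U) = 3 * (U 0 * U 1 - 3 * (U 2 * U 3)) / (4 * U 3) ∧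
      3 * (U 0 * U 1 - 3 * (U 2 * U 3)) / (4 * U 3) < 0) ∧
    (fderiv ℝ lambdaFour U (rFour U) = 3 * U 2 ∧ 0 < 3 * U 2) := by
  have numerator_neg : 3 * (U 0 * U 1 - 3 * (U 2 * U 3)) < 0 := by linarith
  have denominator_pos : 0 < 4 * U 3 := by positivity
  exact ⟨⟨fderiv_lambdaTwo_rTwo hf hb, div_neg_of_neg_of_pos numerator_neg denominator_pos⟩,
    fderiv_lambdaFour_rFour hq.ne', by positivity⟩

end GenuineNonlinearity

/-- Genuine nonlinearity of the second and fourth characteristic fields on `𝒰`: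
`∇λ₂(U)·r₂(U) = 3(fb − 3gq)/(4q) < 0` and `∇λ₄(U)·r₄(U) = 3g > 0`.
The directional derivative `∇λₖ(U)·rₖ(U)` is expressed as
`fderiv ℝ λₖ U (rₖ(U))`. -/
theorem fields_two_four_genuinely_nonlinear (f b g q : ℝ)
    (hf : 0 < f) (hb : 0 < b) (hg : 0 < g) (hq : 0 < q) (hU : f*b < g*q) :
    (fderiv ℝ (fun U : Fin 4 → ℝ => 3 * (U 0 * U 1) / 2) ![f, b, g, q]
        ![(f*b - 3*(g*q))/(4*q*b), (f*b - 3*(g*q))/(4*q*f), g/q, 1]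
      = 3 * (f*b - 3*(g*q)) / (4*q) ∧
      3 * (f*b - 3*(g*q)) / (4*q) < 0) ∧
    (fderiv ℝ (fun U : Fin 4 → ℝ => U 0 * U 1 + 3 * (U 2 * U 3) / 2) ![f, b, g, q]
        ![0, 0, g/q, 1] = 3 * g ∧
      (0:ℝ) < 3 * g) := by
  have hU_three : f * b < 3 * (g * q) := by linarith [mul_pos hg hq]
  exact fields_two_four_genuinely_nonlinear_general (U := ![f, b, g, q])
    hf.ne' hb.ne' hg hq hU_three
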